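/- Soundness of HOCRWL semantics: for any program P without extra variables and any expressions e, e', if ⟦e⟧^P = ⟦e'⟧^P then for every program P' safely extending both (P, e) and (P, e') and every context C built with the signature of P', Obs^{P'}(C[e]) = Obs^{P'}(C[e']). -/

import Mathlib

/-!
The proof has two independent ingredients.

*Compositionality* (`deriv_app_iff`).  Over a program whose rules have arity-many arguments,
`e a ⇒ t` holds exactly when `t = ⊥`, or there are `e ⇒ s` and `a ⇒ u` such that either `s u` is
itself a partial pattern and `t = s u`, or `s u` is an instance `(f p₁ … pₙ)θ` of a left-hand side
whose right-hand side instance derives `t`.  Thus the denotation of an application depends only on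
the denotations of its two parts, and equality of denotations is preserved by every context.
Since the intermediate patterns `s`, `u` are matched exactly, closure of denotations under the
approximation order is not needed.

*Conservativity* (`deriv_mapExp_iff`).  If `P'` safely extends the image of `P`, the derivations
from the image of `e` under `P'` are exactly the images of the derivations from `e` under `P`.
Starting from symbols of `P` and `e`, only rules of `P` can be applied, and the absence of extra
variables means that the relevant part of each matching substitution comes from patterns already
derived, hence from the small signature.

Consequently `⟦e⟧^P = ⟦e'⟧^P` gives equal denotations under `P'`, and then equal denotations
in every context.
-/

/-- A signature: function symbols and constructor symbols, each with an arity. -/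
structure Sig where
  FS : Type
  CS : Type
  arityF : FS → ℕ
  arityC : CS → ℕ

/-- Applicative partial expressions over a signature.  Variables are natural
numbers and `bot` is the distinguished 0-ary constructor `⊥`. -/
inductive Exp (σ : Sig) : Type where
  | var : ℕ → Exp σ
  | fn : σ.FS → Exp σ
  | cn : σ.CS → Exp σ
  | bot : Exp σ
  | app : Exp σ → Exp σ → Exp σ

variable {σ : Sig}

/-- `applyList e [e1, …, en]` is the curried application `e e1 … en`. -/
def applyList (e : Exp σ) (es : List (Exp σ)) : Exp σ := es.foldl Exp.app e

/-- Partial patterns `Pat_⊥`. -/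
inductive IsPPat : Exp σ → Prop where
  | var (x : ℕ) : IsPPat (Exp.var x)
  | bot : IsPPat (Exp.bot : Exp σ)
  | capp (c : σ.CS) (ts : List (Exp σ)) (har : ts.length ≤ σ.arityC c)
      (hts : ∀ t ∈ ts, IsPPat t) : IsPPat (applyList (Exp.cn c) ts)
  | fapp (f : σ.FS) (ts : List (Exp σ)) (har : ts.length < σ.arityF f)
      (hts : ∀ t ∈ ts, IsPPat t) : IsPPat (applyList (Exp.fn f) ts)

/-- The constructor `⊥` does not occur in the expression. -/
def BotFree : Exp σ → Prop
  | .bot => False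
  | .app a b => BotFree a ∧ BotFree b
  | _ => True

/-- Total patterns `Pat`. -/
def IsPat (t : Exp σ) : Prop := IsPPat t ∧ BotFree t

/-- First-order patterns `FOPat`. -/
inductive IsFOPat : Exp σ → Prop where
  | var (x : ℕ) : IsFOPat (Exp.var x)
  | capp (c : σ.CS) (ts : List (Exp σ)) (har : ts.length = σ.arityC c)
      (hts : ∀ t ∈ ts, IsFOPat t) : IsFOPat (applyList (Exp.cn c) ts)

/-- The list of occurrences of variables in an expression. -/
def occVars : Exp σ → List ℕ
  | .var x => [x]
  | .app a b => occVars a ++ occVars b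
  | _ => []

/-- Applying a substitution to an expression. -/
def subst (θ : ℕ → Exp σ) : Exp σ → Exp σ
  | .var x => θ x
  | .fn f => .fn f
  | .cn c => .cn c
  | .bot => .bot
  | .app a b => .app (subst θ a) (subst θ b)

/-- Partial-pattern substitutions `PSubst_⊥`. -/
def PSub (θ : ℕ → Exp σ) : Prop := ∀ x, IsPPat (θ x)

/-- A program rule `f t1 … tn → r` (the left-hand side is `f` applied to `lhs`). -/
structure Rule (σ : Sig) where
  fn : σ.FS
  lhs : List (Exp σ)
  rhs : Exp σ

/-- Well-formedness of a rule: `f` is applied to as many arguments as its arity,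
the arguments form a linear tuple of total patterns. -/
def Rule.WF (r : Rule σ) : Prop :=
  r.lhs.length = σ.arityF r.fn ∧ (∀ t ∈ r.lhs, IsPat t) ∧
    (r.lhs.flatMap occVars).Nodup

/-- The rule has no extra variables: all variables of the right-hand side occur
in the left-hand side. -/
def Rule.NoExtra (r : Rule σ) : Prop :=
  ∀ x ∈ occVars r.rhs, x ∈ r.lhs.flatMap occVars

abbrev Program (σ : Sig) := Set (Rule σ)

/-- A program without extra variables, all whose rules are well formed. -/
def WFProg (P : Program σ) : Prop := ∀ r ∈ P, r.WF ∧ r.NoExtra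

/-- `h ∈ Σ` (a function symbol, a constructor symbol, or `⊥`). -/
def IsSymb : Exp σ → Prop
  | .fn _ => True
  | .cn _ => True
  | .bot => True
  | _ => False

/-- HOCRWL derivation trees for statements `e ⇒ t`, with rules
(B), (RR), (DC) and (OR). -/
inductive DTree (P : Program σ) : Exp σ → Exp σ → Type where
  | bot (e : Exp σ) : DTree P e Exp.bot
  | rr (x : ℕ) : DTree P (Exp.var x) (Exp.var x)
  | dc (h : Exp σ) (es ts : List (Exp σ)) (hsym : IsSymb h)
      (hlen : es.length = ts.length) (hpat : IsPPat (applyList h ts))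
      (ds : ∀ p ∈ es.zip ts, DTree P p.1 p.2) :
      DTree P (applyList h es) (applyList h ts)
  | opr (r : Rule σ) (hr : r ∈ P) (θ : ℕ → Exp σ) (hθ : PSub θ)
      (es as : List (Exp σ)) (t : Exp σ) (hlen : es.length = r.lhs.length)
      (ds : ∀ p ∈ es.zip (r.lhs.map (subst θ)), DTree P p.1 p.2)
      (d : DTree P (applyList (subst θ r.rhs) as) t) :
      DTree P (applyList (Exp.fn r.fn) (es ++ as)) t

/-- `P ⊢ e ⇒ t` is derivable in the HOCRWL proof calculus. -/
def Deriv (P : Program σ) (e t : Exp σ) : Prop := Nonempty (DTree P e t)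

/-- The HOCRWL denotation `⟦e⟧^P = { t ∈ Pat_⊥ | P ⊢ e ⇒ t }`. -/
def den (P : Program σ) (e : Exp σ) : Set (Exp σ) := {t | IsPPat t ∧ Deriv P e t}

/-- Observations: total patterns in the denotation. -/
def Obs (P : Program σ) (e : Exp σ) : Set (Exp σ) := {t | t ∈ den P e ∧ BotFree t}

/-- First-order observations: first-order patterns in the denotation. -/
def ObsFO (P : Program σ) (e : Exp σ) : Set (Exp σ) := {t | t ∈ den P e ∧ IsFOPat t}

/-- Contexts `C ::= [ ] | C e | e C`. -/
inductive Cntxt (σ : Sig) : Type where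
  | hole : Cntxt σ
  | appL : Cntxt σ → Exp σ → Cntxt σ
  | appR : Exp σ → Cntxt σ → Cntxt σ

/-- Filling the hole of a context with an expression. -/
def Cntxt.fill : Cntxt σ → Exp σ → Exp σ
  | .hole, e => e
  | .appL C e', e => .app (C.fill e) e'
  | .appR e' C, e => .app e' (C.fill e)

/-- Function symbols occurring in an expression. -/
def expFS : Exp σ → Set σ.FS
  | .fn f => {f}
  | .app a b => expFS a ∪ expFS b
  | _ => ∅

/-- Function symbols occurring in a rule. -/
def ruleFS (r : Rule σ) : Set σ.FS :=
  insert r.fn ((⋃ t ∈ r.lhs, expFS t) ∪ expFS r.rhs)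

/-- Function symbols occurring in a program. -/
def progFS (P : Program σ) : Set σ.FS := ⋃ r ∈ P, ruleFS r

/-- Function symbols defined by a program (roots of left-hand sides). -/
def defs (P : Program σ) : Set σ.FS := Rule.fn '' P

/-- `P'` is a safe extension of `(P, e)`: `P' = P ⊎ P''` where `P''` defines no
function symbol occurring in `P` or in `e`. -/
def SafeExt (P P' : Program σ) (e : Exp σ) : Prop :=
  ∃ P'' : Program σ, P' = P ∪ P'' ∧ Disjoint P P'' ∧
    Disjoint (defs P'') (expFS e ∪ progFS P)

/-- `e ∼ₙ e'` : `n`-extensional equivalence. -/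
def ExtEquiv (P : Program σ) (n : ℕ) (e e' : Exp σ) : Prop :=
  ∀ es : List (Exp σ), es.length = n →
    den P (applyList e es) = den P (applyList e' es)

/-- An (injective, arity-preserving) extension of signatures, embedding the
signature of `P` into a possibly larger signature providing fresh auxiliary
symbols. -/
structure SigHom (σ τ : Sig) where
  onF : σ.FS → τ.FS
  onC : σ.CS → τ.CS
  injF : Function.Injective onF
  injC : Function.Injective onC
  arF : ∀ f, τ.arityF (onF f) = σ.arityF f
  arC : ∀ c, τ.arityC (onC c) = σ.arityC c

def SigHom.mapExp {σ τ : Sig} (ι : SigHom σ τ) : Exp σ → Exp τ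
  | .var x => .var x
  | .fn f => .fn (ι.onF f)
  | .cn c => .cn (ι.onC c)
  | .bot => .bot
  | .app a b => .app (ι.mapExp a) (ι.mapExp b)

def SigHom.mapRule {σ τ : Sig} (ι : SigHom σ τ) (r : Rule σ) : Rule τ :=
  ⟨ι.onF r.fn, r.lhs.map ι.mapExp, ι.mapExp r.rhs⟩

def SigHom.mapProg {σ τ : Sig} (ι : SigHom σ τ) (P : Program σ) : Program τ :=
  ι.mapRule '' P

/-! ### Derivability as an inductive predicate -/

namespace Deriv

variable {P : Program σ}

theorem bot (e : Exp σ) : Deriv P e Exp.bot := ⟨.bot e⟩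

theorem rr (x : ℕ) : Deriv P (Exp.var x) (Exp.var x) := ⟨.rr x⟩

theorem trees_of_forall₂ {es ts : List (Exp σ)} (h : List.Forall₂ (Deriv P) es ts) :
    Nonempty (∀ p ∈ es.zip ts, DTree P p.1 p.2) :=
  ⟨fun _ hp => Classical.choice ((List.forall₂_iff_zip.1 h).2 hp)⟩

theorem dc {h : Exp σ} {es ts : List (Exp σ)} (hsym : IsSymb h)
    (hpat : IsPPat (applyList h ts)) (hs : List.Forall₂ (Deriv P) es ts) :
    Deriv P (applyList h es) (applyList h ts) := by
  obtain ⟨ds⟩ := trees_of_forall₂ hs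
  exact ⟨.dc h es ts hsym hs.length_eq hpat ds⟩

theorem opr {r : Rule σ} (hr : r ∈ P) {θ : ℕ → Exp σ} (hθ : PSub θ) {es as : List (Exp σ)}
    {t : Exp σ} (hs : List.Forall₂ (Deriv P) es (r.lhs.map (subst θ)))
    (d : Deriv P (applyList (subst θ r.rhs) as) t) :
    Deriv P (applyList (Exp.fn r.fn) (es ++ as)) t := by
  obtain ⟨ds⟩ := trees_of_forall₂ hs
  obtain ⟨d⟩ := d
  exact ⟨.opr r hr θ hθ es as t (by simpa using hs.length_eq) ds d⟩

/-- Rule induction for derivability, with the premises for argument lists given by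
`List.Forall₂`. -/
theorem rule_induction {motive : ∀ e t, Deriv P e t → Prop}
    (bot : ∀ e, motive e Exp.bot (.bot e))
    (rr : ∀ x, motive (Exp.var x) (Exp.var x) (.rr x))
    (dc : ∀ h es ts (hsym : IsSymb h) (hpat : IsPPat (applyList h ts))
      (hs : List.Forall₂ (Deriv P) es ts),
      List.Forall₂ (fun e t => ∃ d : Deriv P e t, motive e t d) es ts →
      motive (applyList h es) (applyList h ts) (.dc hsym hpat hs))
    (opr : ∀ r (hr : r ∈ P) θ (hθ : PSub θ) es as t
      (hs : List.Forall₂ (Deriv P) es (r.lhs.map (subst θ))),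
      List.Forall₂ (fun e t => ∃ d : Deriv P e t, motive e t d) es (r.lhs.map (subst θ)) →
      ∀ d : Deriv P (applyList (subst θ r.rhs) as) t, motive _ _ d →
      motive (applyList (Exp.fn r.fn) (es ++ as)) t (.opr hr hθ hs d))
    {e t : Exp σ} (h : Deriv P e t) : motive e t h := by
  obtain ⟨d⟩ := h
  induction d with
  | bot e => exact bot e
  | rr x => exact rr x
  | dc h es ts hsym hlen hpat ds ih =>
    exact dc h es ts hsym hpat
      (List.forall₂_iff_zip.2 ⟨hlen, fun hp => ⟨ds _ hp⟩⟩)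
      (List.forall₂_iff_zip.2 ⟨hlen, fun hp => ⟨_, ih _ hp⟩⟩)
  | opr r hr θ hθ es as t hlen ds d ihs ih =>
    exact opr r hr θ hθ es as t
      (List.forall₂_iff_zip.2 ⟨by simpa using hlen, fun hp => ⟨ds _ hp⟩⟩)
      (List.forall₂_iff_zip.2 ⟨by simpa using hlen, fun hp => ⟨_, ihs _ hp⟩⟩) ⟨d⟩ ih

theorem isPPat {e t : Exp σ} (h : Deriv P e t) : IsPPat t := by
  induction h using rule_induction with
  | bot e => exact .bot
  | rr x => exact .var x
  | dc h es ts _ hp _ _ => exact hp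
  | opr r _ θ _ es as t _ _ _ ih => exact ih

end Deriv

theorem mem_den_iff {P : Program σ} {e t : Exp σ} : t ∈ den P e ↔ Deriv P e t :=
  ⟨fun h => h.2, fun h => ⟨h.isPPat, h⟩⟩

/-! ### Spines of applications -/

@[simp] theorem applyList_nil (h : Exp σ) : applyList h [] = h := rfl

@[simp] theorem applyList_concat (h : Exp σ) (es : List (Exp σ)) (a : Exp σ) :
    applyList h (es ++ [a]) = .app (applyList h es) a := by
  simp [applyList]

theorem applyList_eq_app {h e a : Exp σ} {es : List (Exp σ)} (hh : IsSymb h)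
    (heq : applyList h es = .app e a) : ∃ es', es = es' ++ [a] ∧ e = applyList h es' := by
  rcases List.eq_nil_or_concat' es with rfl | ⟨es', b, rfl⟩
  · rw [applyList_nil] at heq
    subst heq
    exact hh.elim
  · rw [applyList_concat] at heq
    injection heq with h1 h2
    exact ⟨es', by rw [h2], h1.symm⟩

theorem applyList_ne_var {h : Exp σ} (hh : IsSymb h) (es : List (Exp σ)) (x : ℕ) :
    applyList h es ≠ .var x := by
  rcases List.eq_nil_or_concat' es with rfl | ⟨es', b, rfl⟩
  · rintro h'
    rw [applyList_nil] at h'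
    subst h'
    exact hh
  · simp

theorem applyList_inj {h h' : Exp σ} (hh : IsSymb h) (hh' : IsSymb h')
    {es es' : List (Exp σ)} (heq : applyList h es = applyList h' es') :
    h = h' ∧ es = es' := by
  induction es using List.reverseRecOn generalizing es' with
  | nil =>
    rcases List.eq_nil_or_concat' es' with rfl | ⟨es', b, rfl⟩
    · exact ⟨heq, rfl⟩
    · rw [applyList_nil, applyList_concat] at heq
      subst heq
      exact hh.elim
  | append_singleton es a ih =>
    rw [applyList_concat] at heq
    obtain ⟨es'', rfl, h2⟩ := applyList_eq_app hh' heq.symm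
    obtain ⟨rfl, rfl⟩ := ih h2
    exact ⟨rfl, rfl⟩

theorem IsPPat.of_app {s u : Exp σ} (h : IsPPat (.app s u)) : IsPPat s ∧ IsPPat u := by
  generalize hx : Exp.app s u = x at h
  cases h with
  | var => cases hx
  | bot => cases hx
  | capp c ts har hts =>
    obtain ⟨ts, rfl, rfl⟩ := applyList_eq_app (h := .cn c) trivial hx.symm
    simp only [List.length_append, List.length_singleton] at har
    exact ⟨.capp c ts (by omega) fun t ht => hts t (by simp [ht]), hts u (by simp)⟩
  | fapp c ts har hts =>
    obtain ⟨ts, rfl, rfl⟩ := applyList_eq_app (h := .fn c) trivial hx.symm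
    simp only [List.length_append, List.length_singleton] at har
    exact ⟨.fapp c ts (by omega) fun t ht => hts t (by simp [ht]), hts u (by simp)⟩

theorem not_isPPat_app_var (x : ℕ) (u : Exp σ) : ¬ IsPPat (.app (.var x) u) := by
  intro h
  generalize hx : Exp.app (.var x) u = y at h
  cases h with
  | var => cases hx
  | bot => cases hx
  | capp c ts har hts =>
    obtain ⟨ts, rfl, h2⟩ := applyList_eq_app (h := .cn c) trivial hx.symm
    exact applyList_ne_var (h := .cn c) trivial _ _ h2.symm
  | fapp c ts har hts =>
    obtain ⟨ts, rfl, h2⟩ := applyList_eq_app (h := .fn c) trivial hx.symm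
    exact applyList_ne_var (h := .fn c) trivial _ _ h2.symm

theorem not_isPPat_app_bot (u : Exp σ) : ¬ IsPPat (.app .bot u) := by
  intro h
  generalize hx : Exp.app .bot u = y at h
  have hx' : applyList .bot [u] = y := hx
  cases h with
  | var => cases hx
  | bot => cases hx
  | capp c ts har hts => cases (applyList_inj (h := .bot) (h' := .cn c) trivial trivial hx').1
  | fapp c ts har hts => cases (applyList_inj (h := .bot) (h' := .fn c) trivial trivial hx').1

theorem IsPPat.subst {θ : ℕ → Exp σ} (hθ : PSub θ) {t : Exp σ} (h : IsPPat t) :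
    IsPPat (subst θ t) := by
  have key : ∀ (h : Exp σ) ts,
      _root_.subst θ (applyList h ts) = applyList (_root_.subst θ h) (ts.map (_root_.subst θ)) := by
    intro h ts
    induction ts using List.reverseRecOn with
    | nil => rfl
    | append_singleton ts a ih => simp [_root_.subst, ih]
  induction h with
  | var x => exact hθ x
  | bot => exact .bot
  | capp c ts har hts ih =>
    rw [key]
    exact .capp c _ (by simpa using har) (by simpa using ih)
  | fapp c ts har hts ih =>
    rw [key]
    exact .fapp c _ (by simpa using har) (by simpa using ih)

/-! ### Compositionality of the denotation -/

theorem List.Forall₂.exists_concat_left {α β : Type*} {R : α → β → Prop} {l : List α} {a : α}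
    {l' : List β} (h : List.Forall₂ R (l ++ [a]) l') :
    ∃ m b, l' = m ++ [b] ∧ List.Forall₂ R l m ∧ R a b := by
  rcases List.eq_nil_or_concat' l' with rfl | ⟨m, b, rfl⟩
  · simpa using h.length_eq
  · have hl : l.length = m.length := by simpa using h.length_eq
    have h1 := List.forall₂_take l.length h
    have h2 := List.forall₂_drop l.length h
    rw [List.take_left, hl, List.take_left] at h1
    rw [List.drop_left, hl, List.drop_left] at h2
    exact ⟨m, b, rfl, h1, by simpa using h2⟩

theorem List.Forall₂.concat {α β : Type*} {R : α → β → Prop} {l : List α} {a : α}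
    {m : List β} {b : β} (h : List.Forall₂ R l m) (hab : R a b) :
    List.Forall₂ R (l ++ [a]) (m ++ [b]) :=
  List.rel_append h (.cons hab .nil)

/-- The result of applying the pattern `s` to the pattern `u`: either `s u` is again a pattern,
or it is the instance of a left-hand side and the result is a value of the right-hand side. -/
def PatApp (P : Program σ) (s u t : Exp σ) : Prop :=
  (IsPPat (.app s u) ∧ t = .app s u) ∨
    ∃ r ∈ P, ∃ θ, PSub θ ∧ Exp.app s u = applyList (.fn r.fn) (r.lhs.map (subst θ)) ∧
      Deriv P (subst θ r.rhs) t

/-- An application is evaluated by evaluating both parts to patterns and applying these. -/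
theorem deriv_app_split {P : Program σ} (hP : WFProg P) {e a t : Exp σ}
    (h : Deriv P (.app e a) t) :
    t = .bot ∨ ∃ s u, Deriv P e s ∧ Deriv P a u ∧ PatApp P s u t := by
  generalize hx : Exp.app e a = x at h
  induction h using Deriv.rule_induction generalizing e a with
  | bot => exact .inl rfl
  | rr => cases hx
  | dc h es ts hsym hpat hs _ =>
    obtain ⟨es, rfl, rfl⟩ := applyList_eq_app hsym hx.symm
    obtain ⟨ts, u, rfl, hs, hu⟩ := hs.exists_concat_left
    rw [applyList_concat] at hpat ⊢
    exact .inr ⟨_, u, .dc hsym hpat.of_app.1 hs, hu, .inl ⟨hpat, rfl⟩⟩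
  | opr r hr θ hθ es as t hs _ d ih =>
    rcases List.eq_nil_or_concat' as with rfl | ⟨as, b, rfl⟩
    · rw [List.append_nil] at hx
      obtain ⟨es, rfl, rfl⟩ := applyList_eq_app (h := .fn r.fn) trivial hx.symm
      obtain ⟨ts, u, hl, hs', hu⟩ := hs.exists_concat_left
      refine .inr ⟨applyList (.fn r.fn) ts, u, .dc trivial ?_ hs', hu,
        .inr ⟨r, hr, θ, hθ, by rw [hl, applyList_concat], d⟩⟩
      -- One argument is missing, so the arity condition makes `f ts` a partial pattern.
      have hlen := congrArg List.length hl
      obtain ⟨⟨har, hpat, -⟩, -⟩ := hP r hr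
      simp only [List.length_map, List.length_append, List.length_singleton] at hlen
      refine .fapp _ _ (by omega) fun t ht => ?_
      have : t ∈ r.lhs.map (subst θ) := by rw [hl]; simp [ht]
      obtain ⟨p, hp, rfl⟩ := List.mem_map.1 this
      exact (hpat p hp).1.subst hθ
    · rw [← List.append_assoc, applyList_concat] at hx
      cases hx
      rcases ih (applyList_concat _ _ _).symm with rfl | ⟨s, u, hs', hu, ha⟩
      · exact .inl rfl
      · exact .inr ⟨s, u, .opr hr hθ hs hs', hu, ha⟩

theorem deriv_app_of_patApp {P : Program σ} {e a s u t : Exp σ}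
    (he : Deriv P e s) (ha : Deriv P a u) (hsu : PatApp P s u t) : Deriv P (.app e a) t := by
  induction he using Deriv.rule_induction with
  | bot e =>
    rcases hsu with ⟨h, -⟩ | ⟨r, hr, θ, hθ, heq, d⟩
    · exact (not_isPPat_app_bot _ h).elim
    · obtain ⟨l, -, h2⟩ := applyList_eq_app (h := .fn r.fn) trivial heq.symm
      cases (applyList_inj (h := .bot) (es := []) (h' := .fn r.fn) trivial trivial h2).1
  | rr x =>
    rcases hsu with ⟨h, -⟩ | ⟨r, hr, θ, hθ, heq, d⟩
    · exact (not_isPPat_app_var _ _ h).elim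
    · obtain ⟨l, -, h2⟩ := applyList_eq_app (h := .fn r.fn) trivial heq.symm
      exact (applyList_ne_var (h := .fn r.fn) trivial _ _ h2.symm).elim
  | dc h es ts hsym hpat hs _ =>
    rw [← applyList_concat]
    rcases hsu with ⟨h, rfl⟩ | ⟨r, hr, θ, hθ, heq, d⟩
    · rw [← applyList_concat] at h ⊢
      exact .dc hsym h (hs.concat ha)
    · rw [← applyList_concat] at heq
      obtain ⟨rfl, hl⟩ := applyList_inj (h' := .fn r.fn) hsym trivial heq
      have := Deriv.opr (as := []) hr hθ (hl ▸ hs.concat ha) d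
      rwa [List.append_nil] at this
  | opr r hr θ hθ es as s hs _ _ ih =>
    rw [← applyList_concat, List.append_assoc]
    refine .opr hr hθ hs ?_
    rw [applyList_concat]
    exact ih hsu

theorem deriv_app_iff {P : Program σ} (hP : WFProg P) {e a t : Exp σ} :
    Deriv P (.app e a) t ↔
      t = .bot ∨ ∃ s u, Deriv P e s ∧ Deriv P a u ∧ PatApp P s u t := by
  refine ⟨deriv_app_split hP, ?_⟩
  rintro (rfl | ⟨s, u, h1, h2, h3⟩)
  · exact .bot _
  · exact deriv_app_of_patApp h1 h2 h3

theorem deriv_fill_congr {P : Program σ} (hP : WFProg P) {e e' : Exp σ}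
    (h : ∀ t, Deriv P e t ↔ Deriv P e' t) (C : Cntxt σ) (t : Exp σ) :
    Deriv P (C.fill e) t ↔ Deriv P (C.fill e') t := by
  induction C generalizing t with
  | hole => exact h t
  | appL C a ih => simp only [Cntxt.fill, deriv_app_iff hP, ih]
  | appR a C ih => simp only [Cntxt.fill, deriv_app_iff hP, ih]

/-! ### Signature extensions -/

namespace SigHom

variable {τ : Sig} (ι : SigHom σ τ)

theorem mapExp_applyList (h : Exp σ) (es : List (Exp σ)) :
    ι.mapExp (applyList h es) = applyList (ι.mapExp h) (es.map ι.mapExp) := by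
  induction es using List.reverseRecOn with
  | nil => rfl
  | append_singleton es a ih => simp [mapExp, ih]

theorem mapExp_injective : Function.Injective ι.mapExp := by
  intro a
  induction a with
  | var x => intro b h; cases b <;> simp_all [mapExp]
  | fn f => intro b h; cases b <;> simp_all [mapExp, ι.injF.eq_iff]
  | cn f => intro b h; cases b <;> simp_all [mapExp, ι.injC.eq_iff]
  | bot => intro b h; cases b <;> simp_all [mapExp]
  | app a b iha ihb =>
    intro c h
    cases c with
    | app c d =>
      simp only [mapExp, Exp.app.injEq] at h
      rw [iha h.1, ihb h.2]
    | _ => simp [mapExp] at h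

theorem isSymb_mapExp {h : Exp σ} : IsSymb (ι.mapExp h) ↔ IsSymb h := by
  cases h <;> rfl

theorem exists_of_mapExp_eq_applyList {e : Exp σ} {h : Exp τ} {es : List (Exp τ)}
    (heq : ι.mapExp e = applyList h es) :
    ∃ h₀ es₀, e = applyList h₀ es₀ ∧ h = ι.mapExp h₀ ∧ es = es₀.map ι.mapExp := by
  induction es using List.reverseRecOn generalizing e with
  | nil => exact ⟨e, [], rfl, heq.symm, rfl⟩
  | append_singleton es a ih =>
    rw [applyList_concat] at heq
    cases e with
    | app c d =>
      simp only [mapExp, Exp.app.injEq] at heq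
      obtain ⟨h₀, es₀, rfl, rfl, rfl⟩ := ih heq.1
      exact ⟨h₀, es₀ ++ [d], by simp, rfl, by simp [heq.2]⟩
    | _ => simp [mapExp] at heq

theorem isPPat_mapExp {t : Exp σ} (h : IsPPat t) : IsPPat (ι.mapExp t) := by
  induction h with
  | var x => exact .var x
  | bot => exact .bot
  | capp c ts har _ ih =>
    rw [mapExp_applyList]
    exact .capp _ _ (by simpa [ι.arC] using har) (by simpa using ih)
  | fapp c ts har _ ih =>
    rw [mapExp_applyList]
    exact .fapp _ _ (by simpa [ι.arF] using har) (by simpa using ih)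

theorem isPPat_of_mapExp {t : Exp σ} (h : IsPPat (ι.mapExp t)) : IsPPat t := by
  generalize hx : ι.mapExp t = x at h
  induction h generalizing t with
  | var x =>
    cases t with
    | var y => exact .var y
    | _ => simp [mapExp] at hx
  | bot =>
    cases t with
    | bot => exact .bot
    | _ => simp [mapExp] at hx
  | capp c ts har _ ih =>
    obtain ⟨h₀, ts₀, rfl, h1, rfl⟩ := ι.exists_of_mapExp_eq_applyList hx
    cases h₀ with
    | cn c₀ =>
      simp only [mapExp, Exp.cn.injEq] at h1
      subst h1
      exact .capp _ _ (by simpa [ι.arC] using har)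
        fun t ht => ih _ (List.mem_map_of_mem ht) rfl
    | _ => simp [mapExp] at h1
  | fapp c ts har _ ih =>
    obtain ⟨h₀, ts₀, rfl, h1, rfl⟩ := ι.exists_of_mapExp_eq_applyList hx
    cases h₀ with
    | fn c₀ =>
      simp only [mapExp, Exp.fn.injEq] at h1
      subst h1
      exact .fapp _ _ (by simpa [ι.arF] using har)
        fun t ht => ih _ (List.mem_map_of_mem ht) rfl
    | _ => simp [mapExp] at h1

theorem subst_mapExp {θ : ℕ → Exp τ} {θ₀ : ℕ → Exp σ} {t : Exp σ}
    (h : ∀ x ∈ occVars t, θ x = ι.mapExp (θ₀ x)) :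
    subst θ (ι.mapExp t) = ι.mapExp (subst θ₀ t) := by
  induction t with
  | var x => exact h x (by simp [occVars])
  | app a b iha ihb =>
    simp only [occVars, List.mem_append] at h
    simp only [mapExp, subst]
    rw [iha fun x hx => h x (.inl hx), ihb fun x hx => h x (.inr hx)]
  | _ => rfl

theorem expFS_mapExp (e : Exp σ) : expFS (ι.mapExp e) = ι.onF '' expFS e := by
  induction e with
  | app a b iha ihb => simp only [mapExp, expFS, iha, ihb, Set.image_union]
  | _ => simp [mapExp, expFS]

end SigHom

theorem expFS_applyList_subset {h : Exp σ} {es : List (Exp σ)} {S : Set σ.FS} :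
    expFS (applyList h es) ⊆ S ↔ expFS h ⊆ S ∧ ∀ t ∈ es, expFS t ⊆ S := by
  induction es using List.reverseRecOn with
  | nil => simp
  | append_singleton es a ih =>
    simp only [applyList_concat, expFS, Set.union_subset_iff, ih, List.mem_append,
      List.mem_singleton, or_imp, forall_and, forall_eq, and_assoc]

theorem expFS_subst_subset {θ : ℕ → Exp σ} {e : Exp σ} {S : Set σ.FS}
    (hθ : ∀ x, expFS (θ x) ⊆ S) (he : expFS e ⊆ S) : expFS (subst θ e) ⊆ S := by
  induction e with
  | var x => exact hθ x
  | app a b iha ihb =>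
    simp only [expFS, Set.union_subset_iff] at he
    exact Set.union_subset (iha he.1) (ihb he.2)
  | _ => exact he

/-! ### Conservativity of safe extensions -/

variable {τ : Sig} (ι : SigHom σ τ)

theorem Deriv.mapExp {P : Program σ} {P' : Program τ} (hsub : ι.mapProg P ⊆ P')
    {e t : Exp σ} (h : Deriv P e t) : Deriv P' (ι.mapExp e) (ι.mapExp t) := by
  induction h using Deriv.rule_induction with
  | bot e => exact .bot _
  | rr x => exact .rr x
  | dc h es ts hsym hpat _ ih =>
    have hpat' := ι.isPPat_mapExp hpat
    rw [ι.mapExp_applyList] at hpat' ⊢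
    rw [ι.mapExp_applyList]
    refine .dc (ι.isSymb_mapExp.2 hsym) hpat' ?_
    simpa only [List.forall₂_map_left_iff, List.forall₂_map_right_iff] using
      ih.imp fun _ _ h => h.2
  | opr r hr θ hθ es as t _ ihs _ ih =>
    rw [ι.mapExp_applyList, List.map_append]
    have hsb : ∀ p, subst (fun x => ι.mapExp (θ x)) (ι.mapExp p) = ι.mapExp (subst θ p) :=
      fun p => ι.subst_mapExp fun _ _ => rfl
    refine Deriv.opr (r := ι.mapRule r) (hsub ⟨r, hr, rfl⟩)
      (θ := fun x => ι.mapExp (θ x)) (fun x => ι.isPPat_mapExp (hθ x)) ?_ ?_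
    · have : (ι.mapRule r).lhs.map (subst fun x => ι.mapExp (θ x))
          = (r.lhs.map (subst θ)).map ι.mapExp := by
        simp [SigHom.mapRule, hsb]
      rw [this]
      simpa only [List.forall₂_map_left_iff, List.forall₂_map_right_iff] using
        ihs.imp fun _ _ h => h.2
    · have : subst (fun x => ι.mapExp (θ x)) (ι.mapRule r).rhs = ι.mapExp (subst θ r.rhs) :=
        hsb _
      rw [this, ← ι.mapExp_applyList]
      exact ih

/-- The values of the substitution on the variables of a matched pattern are subterms of the
matching instance. -/
theorem exists_of_subst_eq_mapExp {θ : ℕ → Exp τ} {S : Set σ.FS} {p t : Exp σ}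
    (ht : expFS t ⊆ S) (heq : subst θ (ι.mapExp p) = ι.mapExp t) {x : ℕ}
    (hx : x ∈ occVars p) : ∃ t₀, θ x = ι.mapExp t₀ ∧ expFS t₀ ⊆ S := by
  induction p generalizing t with
  | var y =>
    simp only [occVars, List.mem_singleton] at hx
    subst hx
    exact ⟨t, heq, ht⟩
  | app a b iha ihb =>
    cases t with
    | app c d =>
      simp only [SigHom.mapExp, subst, Exp.app.injEq] at heq
      simp only [expFS, Set.union_subset_iff] at ht
      rcases List.mem_append.1 hx with hx | hx
      · exact iha ht.1 heq.1 hx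
      · exact ihb ht.2 heq.2 hx
    | _ => simp [SigHom.mapExp, subst] at heq
  | _ => simp [occVars] at hx

theorem exists_list_of_forall₂ {P : Program σ} {S : Set σ.FS} {es : List (Exp σ)}
    {ts : List (Exp τ)}
    (h : List.Forall₂ (fun e t => ∃ t₀, t = ι.mapExp t₀ ∧ expFS t₀ ⊆ S ∧ Deriv P e t₀) es ts) :
    ∃ ts₀, ts = ts₀.map ι.mapExp ∧ (∀ t ∈ ts₀, expFS t ⊆ S) ∧
      List.Forall₂ (Deriv P) es ts₀ := by
  induction h with
  | nil => exact ⟨[], rfl, by simp, .nil⟩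
  | cons h _ ih =>
    obtain ⟨t₀, rfl, h1, h2⟩ := h
    obtain ⟨ts₀, rfl, h3, h4⟩ := ih
    exact ⟨t₀ :: ts₀, rfl, by simpa using ⟨h1, h3⟩, .cons h2 h4⟩

/-- Derivations in `P'` starting from the image of an expression over the symbols `S` stay inside
the image, provided every rule of `P'` for a symbol of `S` comes from `P`. -/
theorem Deriv.exists_of_mapExp {P : Program σ} (hP : WFProg P) {P' : Program τ} {S : Set σ.FS}
    (hPS : progFS P ⊆ S) (hsafe : ∀ r ∈ P', r.fn ∈ ι.onF '' S → r ∈ ι.mapProg P)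
    {e : Exp σ} {t : Exp τ} (he : expFS e ⊆ S) (h : Deriv P' (ι.mapExp e) t) :
    ∃ t₀, t = ι.mapExp t₀ ∧ expFS t₀ ⊆ S ∧ Deriv P e t₀ := by
  generalize hx : ι.mapExp e = x at h
  induction h using Deriv.rule_induction generalizing e with
  | bot => exact ⟨.bot, rfl, by simp [expFS], .bot _⟩
  | rr x =>
    cases e with
    | var y =>
      simp only [SigHom.mapExp, Exp.var.injEq] at hx
      subst hx
      exact ⟨.var y, rfl, by simp [expFS], .rr y⟩
    | _ => simp [SigHom.mapExp] at hx
  | dc h es ts hsym hpat _ ih =>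
    obtain ⟨h₀, es₀, rfl, rfl, rfl⟩ := ι.exists_of_mapExp_eq_applyList hx
    rw [expFS_applyList_subset] at he
    rw [List.forall₂_map_left_iff] at ih
    obtain ⟨ts₀, rfl, h3, h4⟩ := exists_list_of_forall₂ ι (P := P) (S := S) (es := es₀) (ts := ts)
      (List.forall₂_iff_zip.2 ⟨ih.length_eq, fun {a b} hp =>
        ((List.forall₂_iff_zip.1 ih).2 hp).2 (he.2 a (List.of_mem_zip hp).1) rfl⟩)
    rw [← ι.mapExp_applyList] at hpat
    exact ⟨applyList h₀ ts₀, (ι.mapExp_applyList _ _).symm, expFS_applyList_subset.2 ⟨he.1, h3⟩,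
      .dc (ι.isSymb_mapExp.1 hsym) (ι.isPPat_of_mapExp hpat) h4⟩
  | opr r hr θ hθ es as t _ ihs _ ih =>
    obtain ⟨h₀, l₀, rfl, h1, h2⟩ := ι.exists_of_mapExp_eq_applyList hx
    obtain ⟨es₀, as₀, rfl, rfl, rfl⟩ := List.map_eq_append_iff.1 h2.symm
    rw [expFS_applyList_subset] at he
    obtain ⟨he1, he2⟩ := he
    cases h₀ with
    | fn f₀ =>
      simp only [SigHom.mapExp, Exp.fn.injEq] at h1
      have hf₀ : f₀ ∈ S := he1 rfl
      obtain ⟨r₀, hr₀, rfl⟩ := hsafe r hr ⟨f₀, hf₀, h1.symm⟩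
      have hff : r₀.fn = f₀ := ι.injF h1
      subst hff
      have hrhs : expFS r₀.rhs ⊆ S := fun f hf =>
        hPS (Set.mem_biUnion hr₀ (.inr (.inr hf)))
      rw [List.forall₂_map_left_iff] at ihs
      obtain ⟨ts₀, hts, h3, h4⟩ := exists_list_of_forall₂ ι (P := P) (S := S) (es := es₀)
        (List.forall₂_iff_zip.2 ⟨ihs.length_eq, fun {a b} hp =>
          ((List.forall₂_iff_zip.1 ihs).2 hp).2
            (he2 a (List.mem_append_left _ (List.of_mem_zip hp).1)) rfl⟩)
      have hvar : ∀ x ∈ r₀.lhs.flatMap occVars, ∃ t₀, θ x = ι.mapExp t₀ ∧ expFS t₀ ⊆ S := by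
        intro x hx
        obtain ⟨p, hp, hxp⟩ := List.mem_flatMap.1 hx
        have hmem : subst θ (ι.mapExp p) ∈ (ι.mapRule r₀).lhs.map (subst θ) :=
          List.mem_map_of_mem (List.mem_map_of_mem hp)
        rw [hts] at hmem
        obtain ⟨t₀, ht₀, heq⟩ := List.mem_map.1 hmem
        exact exists_of_subst_eq_mapExp ι (h3 t₀ ht₀) heq.symm hxp
      -- Outside the variables of the left-hand side the value of `θ` is irrelevant: use `⊥`.
      have hθ₀ : ∀ x, ∃ t₀ : Exp σ, IsPPat t₀ ∧ expFS t₀ ⊆ S ∧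
          (x ∈ r₀.lhs.flatMap occVars → θ x = ι.mapExp t₀) := by
        intro x
        by_cases hx : x ∈ r₀.lhs.flatMap occVars
        · obtain ⟨t₀, h5, h6⟩ := hvar x hx
          exact ⟨t₀, ι.isPPat_of_mapExp (h5 ▸ hθ x), h6, fun _ => h5⟩
        · exact ⟨.bot, .bot, by simp [expFS], fun h => (hx h).elim⟩
      choose θ₀ hpat₀ hS₀ heq₀ using hθ₀
      have hlhs : ts₀ = r₀.lhs.map (subst θ₀) := by
        apply List.map_injective_iff.2 ι.mapExp_injective
        rw [← hts]
        simp only [SigHom.mapRule, List.map_map]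
        refine List.map_congr_left fun p hp => ?_
        exact ι.subst_mapExp fun x hx => heq₀ x (List.mem_flatMap.2 ⟨p, hp, hx⟩)
      have hr : subst θ (ι.mapRule r₀).rhs = ι.mapExp (subst θ₀ r₀.rhs) :=
        ι.subst_mapExp fun x hx => heq₀ x ((hP r₀ hr₀).2 x hx)
      obtain ⟨t₀, rfl, h5, h6⟩ := ih (e := applyList (subst θ₀ r₀.rhs) as₀)
        (expFS_applyList_subset.2 ⟨expFS_subst_subset hS₀ hrhs,
          fun t ht => he2 t (List.mem_append_right _ ht)⟩)
        (by rw [ι.mapExp_applyList, hr])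
      exact ⟨t₀, rfl, h5, .opr hr₀ hpat₀ (hlhs ▸ h4) h6⟩
    | _ => simp [SigHom.mapExp] at h1

theorem progFS_mapProg (P : Program σ) : ι.onF '' progFS P ⊆ progFS (ι.mapProg P) := by
  rintro _ ⟨f, hf, rfl⟩
  obtain ⟨r, hr, hf⟩ := Set.mem_iUnion₂.1 hf
  refine Set.mem_biUnion (Set.mem_image_of_mem _ hr) ?_
  rcases hf with rfl | hf | hf
  · exact .inl rfl
  · obtain ⟨t, ht, hf⟩ := Set.mem_iUnion₂.1 hf
    refine .inr (.inl (Set.mem_biUnion (x := ι.mapExp t) (List.mem_map_of_mem ht) ?_))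
    rw [ι.expFS_mapExp]
    exact ⟨f, hf, rfl⟩
  · refine .inr (.inr ?_)
    simp only [SigHom.mapRule, ι.expFS_mapExp]
    exact ⟨f, hf, rfl⟩

theorem deriv_mapExp_iff {P : Program σ} (hP : WFProg P) {P' : Program τ} {e : Exp σ}
    (hs : SafeExt (ι.mapProg P) P' (ι.mapExp e)) (t : Exp τ) :
    Deriv P' (ι.mapExp e) t ↔ ∃ t₀, t = ι.mapExp t₀ ∧ Deriv P e t₀ := by
  obtain ⟨P'', rfl, -, hdisj⟩ := hs
  constructor
  · intro h
    have hsafe : ∀ r ∈ ι.mapProg P ∪ P'', r.fn ∈ ι.onF '' (expFS e ∪ progFS P) →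
        r ∈ ι.mapProg P := by
      rintro r (hr | hr) hf
      · exact hr
      · refine (Set.disjoint_left.1 hdisj ⟨r, hr, rfl⟩ ?_).elim
        rw [Set.image_union, ← ι.expFS_mapExp] at hf
        exact hf.imp id fun h => progFS_mapProg ι P h
    obtain ⟨t₀, h1, -, h2⟩ := Deriv.exists_of_mapExp ι hP
      Set.subset_union_right hsafe Set.subset_union_left h
    exact ⟨t₀, h1, h2⟩
  · rintro ⟨t₀, rfl, h⟩
    exact h.mapExp ι Set.subset_union_left

/-- **Soundness of the HOCRWL semantics wrt `Obs`**: for a program `P` without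
extra variables and total expressions `e, e'`, if `⟦e⟧^P = ⟦e'⟧^P` then
`Obs^{P'}(C[e]) = Obs^{P'}(C[e'])` for every program `P'` (over any extension
of the signature) safely extending both `(P, e)` and `(P, e')` and every
context `C` built with the signature of `P'`. -/
theorem soundness_Obs (σ : Sig) (P : Program σ) (hP : WFProg P)
    (e e' : Exp σ) (he : BotFree e) (he' : BotFree e')
    (hden : den P e = den P e') :
    ∀ (τ : Sig) (ι : SigHom σ τ) (P' : Program τ), WFProg P' →
      SafeExt (ι.mapProg P) P' (ι.mapExp e) →
      SafeExt (ι.mapProg P) P' (ι.mapExp e') →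
      ∀ C : Cntxt τ,
        Obs P' (C.fill (ι.mapExp e)) = Obs P' (C.fill (ι.mapExp e')) := by
  intro τ ι P' hP' hs hs' C
  have h₀ : ∀ t, Deriv P e t ↔ Deriv P e' t := fun t => by
    rw [← mem_den_iff, ← mem_den_iff, hden]
  have h : ∀ t, Deriv P' (ι.mapExp e) t ↔ Deriv P' (ι.mapExp e') t := fun t => by
    simp only [deriv_mapExp_iff ι hP hs, deriv_mapExp_iff ι hP hs', h₀]
  ext t
  simp only [Obs, Set.mem_ofPred_eq, mem_den_iff, deriv_fill_congr hP' h C t]
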